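/- arXiv:2504.05785 — 7 statements merged into one kernel-verified Lean document; each statement's English description precedes it below -/
import Mathlib

section
/- Let x ∈ 𝒳 and z ∈ {0,1}^N be feasible for the chance-constrained problem in the sense that Σ_{s : z_s = 1} π^(s) ≥ 1 − τ and c(x, ξ^(s̃)) ≤ 0 for every s̃ with z_s̃ = 1. Suppose that for every x ∈ 𝒳 the map ξ ↦ c(x, ξ) is quasiconvex. If s ∈ {1,…,N} satisfies z_s = 0 and ξ^(s) lies in the convex hull of {ξ^(s̃) : z_s̃ = 1}, then c(x, ξ^(s)) ≤ 0, and the pair (x, z + e_s) (i.e., z with its s-th coordinate changed to 1) remains feasible: Σ_{s̃ : (z+e_s)_s̃ = 1} π^(s̃) ≥ 1 − τ and c(x, ξ^(s̃)) ≤ 0 for every s̃ with (z+e_s)_s̃ = 1. -/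
open scoped Classical
open Finset

noncomputable section

variable {N d p : ℕ}

/-- The set of CCP-feasible points. -/
def ccpFeasible (X : Set (Fin d → ℝ)) (c : (Fin d → ℝ) → (Fin p → ℝ) → ℝ)
    (ξ : Fin N → (Fin p → ℝ)) (π : Fin N → ℝ) (τ : ℝ) : Set (Fin d → ℝ) :=
  {x | x ∈ X ∧ 1 - τ ≤ ∑ s ∈ Finset.univ.filter (fun s => c x (ξ s) ≤ 0), π s}

/-- Infimum, in the extended reals, of `F` over `A` (`⊤` if `A = ∅`). -/
def einf (F : (Fin d → ℝ) → ℝ) (A : Set (Fin d → ℝ)) : EReal :=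
  sInf ((fun x => (F x : EReal)) '' A)

/-- `F*_τ`: optimal value of the chance-constrained problem. -/
def Fstar (X : Set (Fin d → ℝ)) (F : (Fin d → ℝ) → ℝ)
    (c : (Fin d → ℝ) → (Fin p → ℝ) → ℝ) (ξ : Fin N → (Fin p → ℝ))
    (π : Fin N → ℝ) (τ : ℝ) : EReal :=
  einf F (ccpFeasible X c ξ π τ)

/-- `ν(S)`: optimal value of the `S`-subproblem. -/
def nuVal (X : Set (Fin d → ℝ)) (F : (Fin d → ℝ) → ℝ)
    (c : (Fin d → ℝ) → (Fin p → ℝ) → ℝ) (ξ : Fin N → (Fin p → ℝ))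
    (S : Finset (Fin N)) : EReal :=
  einf F {x | x ∈ X ∧ ∀ s ∈ S, c x (ξ s) ≤ 0}

/-- Safe set. -/
def IsSafeSet (X : Set (Fin d → ℝ)) (F : (Fin d → ℝ) → ℝ)
    (c : (Fin d → ℝ) → (Fin p → ℝ) → ℝ) (ξ : Fin N → (Fin p → ℝ))
    (π : Fin N → ℝ) (τ : ℝ) (Plus : Finset (Fin N)) : Prop :=
  einf F {x | x ∈ ccpFeasible X c ξ π τ ∧ ∀ s ∈ Plus, c x (ξ s) ≤ 0}
    = Fstar X F c ξ π τ

/-- Pruned set. -/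
def IsPrunedSet (X : Set (Fin d → ℝ)) (F : (Fin d → ℝ) → ℝ)
    (c : (Fin d → ℝ) → (Fin p → ℝ) → ℝ) (ξ : Fin N → (Fin p → ℝ))
    (π : Fin N → ℝ) (τ : ℝ) (Minus : Finset (Fin N)) : Prop :=
  einf F {x | x ∈ X ∧
      1 - τ ≤ ∑ s ∈ Finset.univ.filter (fun s => s ∉ Minus ∧ c x (ξ s) ≤ 0), π s}
    = Fstar X F c ξ π τ

/-- Minimal subset. -/
def IsMinimalSubset (π : Fin N → ℝ) (τ : ℝ) (S : Finset (Fin N)) : Prop :=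
  1 - τ ≤ ∑ s ∈ S, π s ∧ ∀ t ∈ S, ∑ s ∈ S, π s < 1 - τ + π t

theorem statement_0 {N d p : ℕ} (hN : 1 ≤ N) (hd : 1 ≤ d) (hp : 1 ≤ p)
    (X : Set (Fin d → ℝ)) (c : (Fin d → ℝ) → (Fin p → ℝ) → ℝ)
    (ξ : Fin N → (Fin p → ℝ)) (π : Fin N → ℝ) (τ : ℝ)
    (hπ : ∀ s, 0 < π s) (hπsum : ∑ s, π s = 1) (hτ0 : 0 < τ) (hτ1 : τ < 1)
    (hqc : ∀ x ∈ X, QuasiconvexOn ℝ Set.univ (c x))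
    (x : Fin d → ℝ) (z : Fin N → ℝ) (hx : x ∈ X)
    (hz01 : ∀ s, z s = 0 ∨ z s = 1)
    (hzprob : 1 - τ ≤ ∑ t ∈ Finset.univ.filter (fun t => z t = 1), π t)
    (hzc : ∀ t, z t = 1 → c x (ξ t) ≤ 0)
    (s : Fin N) (hzs : z s = 0)
    (hconv : ξ s ∈ convexHull ℝ (ξ '' {t | z t = 1})) :
    c x (ξ s) ≤ 0 ∧
    (1 - τ ≤ ∑ t ∈ Finset.univ.filter (fun t => Function.update z s 1 t = 1), π t) ∧
    (∀ t, Function.update z s 1 t = 1 → c x (ξ t) ≤ 0) := by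
  have h1 : c x (ξ s) ≤ 0 := by
    have hsub : ξ '' {t | z t = 1} ⊆ {y | y ∈ Set.univ ∧ c x y ≤ 0} := by
      rintro _ ⟨t, ht, rfl⟩
      exact ⟨Set.mem_univ _, hzc t ht⟩
    exact (convexHull_min hsub (hqc x hx 0) hconv).2
  refine ⟨h1, ?_, ?_⟩
  · refine hzprob.trans (Finset.sum_le_sum_of_subset_of_nonneg ?_ (fun i _ _ => (hπ i).le))
    intro t ht
    simp only [Finset.mem_filter, Finset.mem_univ, true_and] at ht ⊢
    by_cases h : t = s
    · subst h
      simp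
    · rw [Function.update_of_ne h]
      exact ht
  · intro t ht
    by_cases h : t = s
    · subst h
      exact h1
    · rw [Function.update_of_ne h] at ht
      exact hzc t ht
end
end

section
/- Assume 𝒳 is nonempty and compact, F is continuous, c(·, ξ^(s̃)) is continuous for every s̃, and the set of CCP-feasible points is nonempty. Let ⊕ ⊆ {1,…,N} be a safe set, let F̂ be a real number with F̂ ≥ F*_τ, and let S ⊆ ⊕. If every x ∈ 𝒳 with F(x) ≤ F̂ and c(x, ξ^(s̃)) ≤ 0 for all s̃ ∈ S satisfies c(x, ξ^(s)) ≤ 0, then ⊕ ∪ {s} is a safe set. -/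
open scoped Classical
open Finset

noncomputable section

variable {N d p : ℕ}

theorem ccpFeasible_closed {N d p : ℕ}
    (X : Set (Fin d → ℝ))
    (c : (Fin d → ℝ) → (Fin p → ℝ) → ℝ) (ξ : Fin N → (Fin p → ℝ))
    (π : Fin N → ℝ) (τ : ℝ)
    (hπ : ∀ s, 0 < π s) (hX : IsClosed X)
    (hc : ∀ t, Continuous (fun x => c x (ξ t))) :
    IsClosed (ccpFeasible X c ξ π τ) := by
  have h : ccpFeasible X c ξ π τ = X ∩ ⋃ T ∈ {T : Finset (Fin N) | 1 - τ ≤ ∑ s ∈ T, π s},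
      {x | ∀ s ∈ T, c x (ξ s) ≤ 0} := by
    ext x
    simp only [ccpFeasible, Set.mem_setOf_eq, Set.mem_inter_iff, Set.mem_iUnion, exists_prop]
    refine and_congr_right fun _ => ⟨fun hx => ⟨_, hx, by simp⟩, ?_⟩
    rintro ⟨T, hT, hx⟩
    refine hT.trans (Finset.sum_le_sum_of_subset_of_nonneg ?_ fun t _ _ => (hπ t).le)
    intro t ht
    simpa using hx t ht
  rw [h]
  refine hX.inter (Set.Finite.isClosed_biUnion (Set.toFinite _) fun T _ => ?_)
  simp only [Set.setOf_forall]
  exact isClosed_biInter fun t _ => isClosed_le (hc t) continuous_const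

theorem statement_1 {N d p : ℕ}
    (hN : 1 ≤ N) (hd : 1 ≤ d) (hp : 1 ≤ p)
    (X : Set (Fin d → ℝ)) (F : (Fin d → ℝ) → ℝ)
    (c : (Fin d → ℝ) → (Fin p → ℝ) → ℝ) (ξ : Fin N → (Fin p → ℝ))
    (π : Fin N → ℝ) (τ : ℝ)
    (hπ : ∀ s, 0 < π s) (hπsum : ∑ s, π s = 1) (hτ0 : 0 < τ) (hτ1 : τ < 1)
    (hXne : X.Nonempty) (hXcpt : IsCompact X) (hF : Continuous F)
    (hc : ∀ t, Continuous (fun x => c x (ξ t)))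
    (hfeas : (ccpFeasible X c ξ π τ).Nonempty)
    (Plus : Finset (Fin N)) (hsafe : IsSafeSet X F c ξ π τ Plus)
    (Fhat : ℝ) (hFhat : Fstar X F c ξ π τ ≤ (Fhat : EReal))
    (S : Finset (Fin N)) (hS : S ⊆ Plus) (s : Fin N)
    (hcond : ∀ x ∈ X, F x ≤ Fhat → (∀ t ∈ S, c x (ξ t) ≤ 0) → c x (ξ s) ≤ 0) :
    IsSafeSet X F c ξ π τ (insert s Plus) := by
  have hcl := ccpFeasible_closed X c ξ π τ hπ hXcpt.isClosed hc
  have hAcl : IsClosed {x | x ∈ ccpFeasible X c ξ π τ ∧ ∀ s ∈ Plus, c x (ξ s) ≤ 0} := by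
    refine hcl.inter ?_
    change IsClosed {x | ∀ s ∈ Plus, c x (ξ s) ≤ 0}
    simp only [Set.setOf_forall]
    exact isClosed_biInter fun t _ => isClosed_le (hc t) continuous_const
  have hAc := hXcpt.of_isClosed_subset hAcl fun x hx => hx.1.1
  unfold IsSafeSet at hsafe ⊢
  have hne : {x | x ∈ ccpFeasible X c ξ π τ ∧ ∀ s ∈ Plus, c x (ξ s) ≤ 0}.Nonempty := by
    by_contra hcon
    rw [Set.not_nonempty_iff_eq_empty] at hcon
    rw [hcon] at hsafe
    rw [← hsafe] at hFhat
    simp [einf] at hFhat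
  obtain ⟨x, hxA, hmin⟩ := hAc.exists_isMinOn hne hF.continuousOn
  have hx1 : (F x : EReal) ≤ Fstar X F c ξ π τ := by
    rw [← hsafe]
    refine le_sInf ?_
    rintro _ ⟨y, hy, rfl⟩
    exact EReal.coe_le_coe_iff.2 (hmin hy)
  have hxs : c x (ξ s) ≤ 0 :=
    hcond x hxA.1.1 (EReal.coe_le_coe_iff.1 (hx1.trans hFhat)) fun t ht => hxA.2 t (hS ht)
  apply le_antisymm
  · refine le_trans (sInf_le ⟨x, ⟨hxA.1, ?_⟩, rfl⟩) hx1
    intro t ht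
    rcases Finset.mem_insert.1 ht with rfl | ht
    · exact hxs
    · exact hxA.2 t ht
  · exact sInf_le_sInf (Set.image_mono fun y hy => hy.1)
end
end

section
/- Assume that for every x ∈ 𝒳 the map ξ ↦ c(x, ξ) is quasiconvex. If ⊕ ⊆ {1,…,N} is a safe set, then the (possibly larger) set {s ∈ {1,…,N} : ξ^(s) ∈ conv({ξ^(s̃) : s̃ ∈ ⊕})} is also a safe set. -/
open scoped Classical
open Finset

noncomputable section

variable {N d p : ℕ}

theorem statement_3 {N d p : ℕ}
    (hN : 1 ≤ N) (hd : 1 ≤ d) (hp : 1 ≤ p)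
    (X : Set (Fin d → ℝ)) (F : (Fin d → ℝ) → ℝ)
    (c : (Fin d → ℝ) → (Fin p → ℝ) → ℝ) (ξ : Fin N → (Fin p → ℝ))
    (π : Fin N → ℝ) (τ : ℝ)
    (hπ : ∀ s, 0 < π s) (hπsum : ∑ s, π s = 1) (hτ0 : 0 < τ) (hτ1 : τ < 1)
    (hqc : ∀ x ∈ X, QuasiconvexOn ℝ Set.univ (c x))
    (Plus : Finset (Fin N)) (hsafe : IsSafeSet X F c ξ π τ Plus) :
    IsSafeSet X F c ξ π τ
      (Finset.univ.filter (fun s => ξ s ∈ convexHull ℝ (ξ '' ↑Plus))) := by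
  have key : {x | x ∈ ccpFeasible X c ξ π τ ∧
        ∀ s ∈ Finset.univ.filter (fun s => ξ s ∈ convexHull ℝ (ξ '' ↑Plus)), c x (ξ s) ≤ 0}
      = {x | x ∈ ccpFeasible X c ξ π τ ∧ ∀ s ∈ Plus, c x (ξ s) ≤ 0} := by
    ext x
    constructor
    · rintro ⟨hx, h⟩
      refine ⟨hx, fun s hs => h s ?_⟩
      simp only [Finset.mem_filter, Finset.mem_univ, true_and]
      exact subset_convexHull ℝ _ ⟨s, hs, rfl⟩
    · rintro ⟨hx, h⟩
      refine ⟨hx, fun s hs => ?_⟩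
      simp only [Finset.mem_filter, Finset.mem_univ, true_and] at hs
      have hsub : ξ '' ↑Plus ⊆ {y | y ∈ Set.univ ∧ c x y ≤ 0} := by
        rintro _ ⟨t, ht, rfl⟩
        exact ⟨Set.mem_univ _, h t ht⟩
      exact (convexHull_min hsub (hqc x hx.1 0) hs).2
  unfold IsSafeSet at hsafe ⊢
  rw [key]
  exact hsafe
end
end

section
/- Assume that for every x ∈ 𝒳 the map ξ ↦ c(x, ξ) is quasiconvex. Fix S ⊆ {1,…,N}, let Ξ = conv({ξ^(s̃) : s̃ ∈ S}), let V(S) = {s̃ ∈ S : ξ^(s̃) is an extreme point of Ξ} and N(S) = {s ∈ {1,…,N} : ξ^(s) ∈ Ξ}. Then for every pair (x, z) with x ∈ 𝒳, z ∈ {0,1}^N, Σ_{s̃ : z_s̃ = 1} π^(s̃) ≥ 1 − τ and c(x, ξ^(s̃)) ≤ 0 whenever z_s̃ = 1, there exists z′ ∈ {0,1}^N with z′ ≥ z componentwise such that (x, z′) is feasible in the same sense and z′ satisfies all the inequalities z′_s ≥ Σ_{s̃∈V(S)} z′_s̃ − |V(S)| + 1 for every s ∈ N(S) \ V(S). Consequently,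 adding these inequalities to the mixed-integer reformulation does not increase the optimal value F*_τ. -/
open scoped Classical
open Finset

noncomputable section

variable {N d p : ℕ}

/-- `V(S)`: indices of scenarios in `S` that are extreme points (vertices) of
`Ξ = conv {ξ t | t ∈ S}`. -/
def vertSet (ξ : Fin N → (Fin p → ℝ)) (S : Finset (Fin N)) : Finset (Fin N) :=
  S.filter (fun t => ξ t ∈ Set.extremePoints ℝ (convexHull ℝ (ξ '' ↑S)))

/-- `N(S)`: indices of all scenarios contained in `Ξ = conv {ξ t | t ∈ S}`. -/
def hullSet (ξ : Fin N → (Fin p → ℝ)) (S : Finset (Fin N)) : Finset (Fin N) :=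
  Finset.univ.filter (fun s => ξ s ∈ convexHull ℝ (ξ '' ↑S))

lemma hull_le_of_vert {N p : ℕ} (f : (Fin p → ℝ) → ℝ) (hf : QuasiconvexOn ℝ Set.univ f)
    (ξ : Fin N → (Fin p → ℝ)) (S : Finset (Fin N))
    (h : ∀ t ∈ vertSet ξ S, f (ξ t) ≤ 0) (s : Fin N) (hs : s ∈ hullSet ξ S) : f (ξ s) ≤ 0 := by
  have hs' : ξ s ∈ convexHull ℝ (ξ '' (S : Set (Fin N))) := by
    simpa [hullSet] using hs
  have hfin : (ξ '' (S : Set (Fin N))).Finite := S.finite_toSet.image ξ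
  have hsub : (convexHull ℝ (ξ '' (S : Set (Fin N)))).extremePoints ℝ ⊆ ξ '' (S : Set (Fin N)) :=
    extremePoints_convexHull_subset
  have hKM := closure_convexHull_extremePoints (hfin.isCompact_convexHull ℝ)
    (convex_convexHull ℝ (ξ '' (S : Set (Fin N))))
  rw [((hfin.subset hsub).isClosed_convexHull ℝ).closure_eq] at hKM
  rw [← hKM] at hs'
  have hc : Convex ℝ {y | y ∈ Set.univ ∧ f y ≤ 0} := hf 0
  have := convexHull_min (s := (convexHull ℝ (ξ '' (S : Set (Fin N)))).extremePoints ℝ)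
    (t := {y | y ∈ Set.univ ∧ f y ≤ 0}) (by
      intro y hy
      obtain ⟨t, ht, rfl⟩ := hsub hy
      refine ⟨Set.mem_univ _, h t ?_⟩
      simp only [vertSet, Finset.mem_filter]
      exact ⟨ht, hy⟩) hc
  exact (this hs').2

lemma ind_cut {N p : ℕ} (f : (Fin p → ℝ) → ℝ) (hf : QuasiconvexOn ℝ Set.univ f)
    (ξ : Fin N → (Fin p → ℝ)) (S : Finset (Fin N)) (z : Fin N → ℝ)
    (hz : ∀ t, z t = if f (ξ t) ≤ 0 then 1 else 0) (s : Fin N) (hs : s ∈ hullSet ξ S) :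
    (∑ t ∈ vertSet ξ S, z t) - ((vertSet ξ S).card : ℝ) + 1 ≤ z s := by
  have hle : ∀ t, z t ≤ 1 := by
    intro t; rw [hz]; split_ifs <;> norm_num
  by_cases h : ∀ t ∈ vertSet ξ S, f (ξ t) ≤ 0
  · have h1 := hull_le_of_vert f hf ξ S h s hs
    have h2 : ∑ t ∈ vertSet ξ S, z t ≤ ∑ t ∈ vertSet ξ S, (1 : ℝ) :=
      Finset.sum_le_sum fun t _ => hle t
    simp only [Finset.sum_const, nsmul_eq_mul, mul_one] at h2
    rw [hz s, if_pos h1]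
    linarith
  · push Not at h
    obtain ⟨t, ht, hft⟩ := h
    have h0 : z t = 0 := by rw [hz, if_neg (not_le.2 hft)]
    have h2 : 1 - z t ≤ ∑ t ∈ vertSet ξ S, (1 - z t) :=
      Finset.single_le_sum (f := fun t => 1 - z t) (fun i _ => sub_nonneg.2 (hle i)) ht
    simp only [Finset.sum_sub_distrib, Finset.sum_const, nsmul_eq_mul, mul_one] at h2
    have h3 : 0 ≤ z s := by rw [hz]; split_ifs <;> norm_num
    linarith

theorem statement_7 {N d p : ℕ}
    (hN : 1 ≤ N) (hd : 1 ≤ d) (hp : 1 ≤ p)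
    (X : Set (Fin d → ℝ)) (F : (Fin d → ℝ) → ℝ)
    (c : (Fin d → ℝ) → (Fin p → ℝ) → ℝ) (ξ : Fin N → (Fin p → ℝ))
    (π : Fin N → ℝ) (τ : ℝ)
    (hπ : ∀ s, 0 < π s) (hπsum : ∑ s, π s = 1) (hτ0 : 0 < τ) (hτ1 : τ < 1)
    (hqc : ∀ x ∈ X, QuasiconvexOn ℝ Set.univ (c x))
    (S : Finset (Fin N)) :
    (∀ x ∈ X, ∀ z : Fin N → ℝ, (∀ t, z t = 0 ∨ z t = 1) →
      1 - τ ≤ ∑ t ∈ Finset.univ.filter (fun t => z t = 1), π t →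
      (∀ t, z t = 1 → c x (ξ t) ≤ 0) →
      ∃ z' : Fin N → ℝ, (∀ t, z' t = 0 ∨ z' t = 1) ∧ (∀ t, z t ≤ z' t) ∧
        (1 - τ ≤ ∑ t ∈ Finset.univ.filter (fun t => z' t = 1), π t) ∧
        (∀ t, z' t = 1 → c x (ξ t) ≤ 0) ∧
        (∀ s ∈ hullSet ξ S \ vertSet ξ S,
          (∑ t ∈ vertSet ξ S, z' t) - ((vertSet ξ S).card : ℝ) + 1 ≤ z' s)) ∧
    Fstar X F c ξ π τ =
      sInf ((fun q : (Fin d → ℝ) × (Fin N → ℝ) => (F q.1 : EReal)) ''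
        {q | q.1 ∈ X ∧ (∀ t, q.2 t = 0 ∨ q.2 t = 1) ∧
          (1 - τ ≤ ∑ t ∈ Finset.univ.filter (fun t => q.2 t = 1), π t) ∧
          (∀ t, q.2 t = 1 → c q.1 (ξ t) ≤ 0) ∧
          (∀ s ∈ hullSet ξ S \ vertSet ξ S,
            (∑ t ∈ vertSet ξ S, q.2 t) - ((vertSet ξ S).card : ℝ) + 1 ≤ q.2 s)}) := by
  have key : ∀ x ∈ X, ∀ z : Fin N → ℝ, (∀ t, z t = 0 ∨ z t = 1) →
      1 - τ ≤ ∑ t ∈ Finset.univ.filter (fun t => z t = 1), π t →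
      (∀ t, z t = 1 → c x (ξ t) ≤ 0) →
      ∃ z' : Fin N → ℝ, (∀ t, z' t = 0 ∨ z' t = 1) ∧ (∀ t, z t ≤ z' t) ∧
        (1 - τ ≤ ∑ t ∈ Finset.univ.filter (fun t => z' t = 1), π t) ∧
        (∀ t, z' t = 1 → c x (ξ t) ≤ 0) ∧
        (∀ s ∈ hullSet ξ S \ vertSet ξ S,
          (∑ t ∈ vertSet ξ S, z' t) - ((vertSet ξ S).card : ℝ) + 1 ≤ z' s) := by
    intro x hx z hz hsum hc
    refine ⟨fun t => if c x (ξ t) ≤ 0 then 1 else 0, ?_, ?_, ?_, ?_, ?_⟩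
    · intro t; dsimp only; split_ifs <;> simp
    · intro t
      rcases hz t with h | h
      · dsimp only; rw [h]; split_ifs <;> norm_num
      · dsimp only; rw [h, if_pos (hc t h)]
    · refine hsum.trans (Finset.sum_le_sum_of_subset_of_nonneg ?_ fun i _ _ => (hπ i).le)
      intro t ht
      simp only [Finset.mem_filter, Finset.mem_univ, true_and] at ht ⊢
      rw [if_pos (hc t ht)]
    · intro t ht
      by_contra h
      simp [h] at ht
    · intro s hs
      exact ind_cut (c x) (hqc x hx) ξ S _ (fun t => rfl) s (Finset.mem_sdiff.1 hs).1
  refine ⟨key, ?_⟩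
  unfold Fstar einf
  apply congrArg
  ext y
  constructor
  · rintro ⟨x, ⟨hx, hsum⟩, rfl⟩
    obtain ⟨z', h1, -, h3, h4, h5⟩ := key x hx (fun t => if c x (ξ t) ≤ 0 then 1 else 0)
      (by intro t; split_ifs <;> simp)
      (by
        refine hsum.trans (Finset.sum_le_sum_of_subset_of_nonneg ?_ fun i _ _ => (hπ i).le)
        intro t ht
        simp only [Finset.mem_filter, Finset.mem_univ, true_and] at ht ⊢
        rw [if_pos ht])
      (by
        intro t ht
        by_contra h
        simp [h] at ht)
    exact ⟨(x, z'), ⟨hx, h1, h3, h4, h5⟩, rfl⟩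
  · rintro ⟨⟨x, z⟩, ⟨hx, h1, h3, h4, h5⟩, rfl⟩
    refine ⟨x, ⟨hx, h3.trans (Finset.sum_le_sum_of_subset_of_nonneg ?_ fun i _ _ => (hπ i).le)⟩, rfl⟩
    intro t ht
    simp only [Finset.mem_filter, Finset.mem_univ, true_and] at ht ⊢
    exact h4 t ht
end
end

section
/- Assume that for every x ∈ 𝒳 the map ξ ↦ c(x, ξ) is quasiconvex, and that scenarios are equiprobable: π^(s) = 1/N for every s. Fix S ⊆ {1,…,N}, let Ξ = conv({ξ^(s̃) : s̃ ∈ S}), let V(S) = {s̃ ∈ S : ξ^(s̃) is an extreme point of Ξ} and N(S) = {s ∈ {1,…,N} : ξ^(s) ∈ Ξ}, and suppose |N(S)|/N ≥ (1 − τ) + 1/N. Then F*_τ equals the infimum of F(x) over all pairs (x, z) with x ∈ 𝒳, z ∈ {0,1}^N, Σ_{s̃ : z_s̃ = 1} π^(s̃) ≥ 1 − τ, c(x, ξ^(s̃)) ≤ 0 whenever z_s̃ = 1, and additionally Σ_{s̃∈V(S)} z_s̃ ≤ |V(S)| − 1; i.e., the inequality Σ_{s̃∈V(S)} z_s̃ ≤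 |V(S)| − 1 is valid for the chance-constrained problem. -/
open scoped Classical
open Finset

noncomputable section

variable {N d p : ℕ}

theorem hull_vert_aux {N p : ℕ} (ξ : Fin N → (Fin p → ℝ)) (S : Finset (Fin N)) :
    convexHull ℝ (ξ '' ↑(vertSet ξ S)) = convexHull ℝ (ξ '' (↑S : Set (Fin N))) := by
  have hfin : (ξ '' (↑S : Set (Fin N))).Finite := S.finite_toSet.image ξ
  have hE : ξ '' ↑(vertSet ξ S) = Set.extremePoints ℝ (convexHull ℝ (ξ '' (↑S : Set (Fin N)))) := by
    ext y
    constructor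
    · rintro ⟨t, ht, rfl⟩
      exact (Finset.mem_filter.1 (Finset.mem_coe.1 ht)).2
    · intro hy
      obtain ⟨t, ht, rfl⟩ := extremePoints_convexHull_subset hy
      exact ⟨t, Finset.mem_coe.2 (Finset.mem_filter.2 ⟨Finset.mem_coe.1 ht, hy⟩), rfl⟩
  have hfin2 : (ξ '' (↑(vertSet ξ S) : Set (Fin N))).Finite :=
    (vertSet ξ S).finite_toSet.image ξ
  have hk := closure_convexHull_extremePoints (hfin.isCompact_convexHull (𝕜 := ℝ))
    (convex_convexHull ℝ (ξ '' (↑S : Set (Fin N))))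
  rw [← hE, (hfin2.isClosed_convexHull (𝕜 := ℝ)).closure_eq] at hk
  exact hk

theorem statement_8 {N d p : ℕ}
    (hN : 1 ≤ N) (hd : 1 ≤ d) (hp : 1 ≤ p)
    (X : Set (Fin d → ℝ)) (F : (Fin d → ℝ) → ℝ)
    (c : (Fin d → ℝ) → (Fin p → ℝ) → ℝ) (ξ : Fin N → (Fin p → ℝ))
    (π : Fin N → ℝ) (τ : ℝ)
    (hπ : ∀ s, 0 < π s) (hπsum : ∑ s, π s = 1) (hτ0 : 0 < τ) (hτ1 : τ < 1)
    (hqc : ∀ x ∈ X, QuasiconvexOn ℝ Set.univ (c x))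
    (hequi : ∀ s, π s = 1 / N)
    (S : Finset (Fin N))
    (hcard : (1 - τ) + 1 / N ≤ ((hullSet ξ S).card : ℝ) / N) :
    Fstar X F c ξ π τ =
      sInf ((fun q : (Fin d → ℝ) × (Fin N → ℝ) => (F q.1 : EReal)) ''
        {q | q.1 ∈ X ∧ (∀ t, q.2 t = 0 ∨ q.2 t = 1) ∧
          (1 - τ ≤ ∑ t ∈ Finset.univ.filter (fun t => q.2 t = 1), π t) ∧
          (∀ t, q.2 t = 1 → c q.1 (ξ t) ≤ 0) ∧
          ∑ t ∈ vertSet ξ S, q.2 t ≤ ((vertSet ξ S).card : ℝ) - 1}) := by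
  have hNpos : (0:ℝ) < N := by exact_mod_cast hN
  have hH := hull_vert_aux ξ S
  have hne : (vertSet ξ S).Nonempty := by
    rw [Finset.nonempty_iff_ne_empty]
    intro h0
    rw [h0] at hH
    have h1 : hullSet ξ S = ∅ := by
      unfold hullSet
      rw [← hH]
      simp
    rw [h1] at hcard
    have : (0:ℝ) < (N:ℝ)⁻¹ := by positivity
    simp at hcard
    linarith
  unfold Fstar einf
  congr 1
  ext y
  constructor
  · rintro ⟨x, ⟨hx, hs⟩, rfl⟩
    have key : ∃ B : Finset (Fin N), (∀ t ∈ B, c x (ξ t) ≤ 0) ∧ 1 - τ ≤ ∑ t ∈ B, π t ∧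
        ∃ v ∈ vertSet ξ S, v ∉ B := by
      by_cases hV : ∀ v ∈ vertSet ξ S, c x (ξ v) ≤ 0
      · obtain ⟨v, hv⟩ := hne
        refine ⟨(hullSet ξ S).erase v, ?_, ?_, v, hv, Finset.notMem_erase _ _⟩
        · intro t ht
          have ht' := (Finset.mem_filter.1 (Finset.mem_of_mem_erase ht)).2
          rw [← hH] at ht'
          have hconv := hqc x hx 0
          have hsub : convexHull ℝ (ξ '' (↑(vertSet ξ S) : Set (Fin N)))
              ⊆ {y | y ∈ Set.univ ∧ c x y ≤ 0} := by
            apply convexHull_min _ hconv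
            rintro _ ⟨w, hw, rfl⟩
            exact ⟨trivial, hV w hw⟩
          exact (hsub ht').2
        · have hvH : v ∈ hullSet ξ S := by
            refine Finset.mem_filter.2 ⟨Finset.mem_univ _, ?_⟩
            exact subset_convexHull ℝ _ ⟨v, (Finset.mem_filter.1 hv).1, rfl⟩
          have h2 := Finset.add_sum_erase (hullSet ξ S) π hvH
          have h3 : ∑ t ∈ hullSet ξ S, π t = ((hullSet ξ S).card : ℝ) / N := by
            simp [hequi, div_eq_mul_inv]
          rw [h3, hequi v] at h2
          linarith
      · push Not at hV
        obtain ⟨v, hv, hc⟩ := hV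
        refine ⟨Finset.univ.filter (fun s => c x (ξ s) ≤ 0), ?_, hs, v, hv, ?_⟩
        · intro t ht
          exact (Finset.mem_filter.1 ht).2
        · intro h
          exact absurd (Finset.mem_filter.1 h).2 (not_le.2 hc)
    obtain ⟨B, hB, hBs, v, hv, hvB⟩ := key
    refine ⟨(x, fun t => if t ∈ B then 1 else 0), ⟨hx, ?_, ?_, ?_, ?_⟩, rfl⟩
    · intro t
      by_cases h : t ∈ B <;> simp [h]
    · have : (Finset.univ.filter (fun t => (if t ∈ B then (1:ℝ) else 0) = 1)) = B := by
        ext t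
        simp
      simpa [this] using hBs
    · intro t ht
      apply hB
      by_contra h
      simp [h] at ht
    · dsimp only
      rw [← Finset.add_sum_erase _ _ hv, if_neg hvB]
      have h4 : ∑ t ∈ (vertSet ξ S).erase v, (if t ∈ B then (1:ℝ) else 0)
          ≤ ∑ t ∈ (vertSet ξ S).erase v, 1 := by
        apply Finset.sum_le_sum
        intro t _
        split_ifs <;> norm_num
      have h5 := Finset.card_erase_add_one hv
      have h6 : (((vertSet ξ S).erase v).card : ℝ) + 1 = (vertSet ξ S).card := by
        exact_mod_cast h5
      simp only [Finset.sum_const, nsmul_eq_mul, mul_one] at h4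
      linarith
  · rintro ⟨⟨x, z⟩, ⟨hx, -, hs, hc, -⟩, rfl⟩
    refine ⟨x, ⟨hx, hs.trans ?_⟩, rfl⟩
    apply Finset.sum_le_sum_of_subset_of_nonneg
    · intro t ht
      exact Finset.mem_filter.2 ⟨Finset.mem_univ _, hc t (Finset.mem_filter.1 ht).2⟩
    · intro t _ _
      exact (hπ t).le
end
end

section
/- Let 𝐒_τ denote the collection of all minimal subsets of {1,…,N}. Then the set of CCP-feasible points equals the union over S ∈ 𝐒_τ of the sets 𝒳(S) := {x ∈ 𝒳 : c(x, ξ^(s)) ≤ 0 for all s ∈ S}. -/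
open scoped Classical
open Finset

noncomputable section

variable {N d p : ℕ}

theorem statement_11 {N d p : ℕ} (hN : 1 ≤ N) (hd : 1 ≤ d) (hp : 1 ≤ p)
    (X : Set (Fin d → ℝ)) (c : (Fin d → ℝ) → (Fin p → ℝ) → ℝ)
    (ξ : Fin N → (Fin p → ℝ)) (π : Fin N → ℝ) (τ : ℝ)
    (hπ : ∀ s, 0 < π s) (hπsum : ∑ s, π s = 1) (hτ0 : 0 < τ) (hτ1 : τ < 1) :
    ccpFeasible X c ξ π τ =
      ⋃ S ∈ {S : Finset (Fin N) | IsMinimalSubset π τ S},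
        {x | x ∈ X ∧ ∀ s ∈ S, c x (ξ s) ≤ 0} := by
  ext x
  simp only [ccpFeasible, Set.mem_setOf_eq, Set.mem_iUnion, exists_prop]
  constructor
  · rintro ⟨hx, h⟩
    have key : ∀ T : Finset (Fin N), 1 - τ ≤ ∑ s ∈ T, π s →
        ∃ S, S ⊆ T ∧ IsMinimalSubset π τ S := by
      intro T
      induction T using Finset.strongInduction with
      | H T ih =>
        intro hT
        by_cases hm : ∀ t ∈ T, ∑ s ∈ T, π s < 1 - τ + π t
        · exact ⟨T, Finset.Subset.refl T, hT, hm⟩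
        · push Not at hm
          obtain ⟨t, ht, hle⟩ := hm
          have he := Finset.sum_erase_add T π ht
          obtain ⟨S, hS, hmin⟩ := ih (T.erase t) (Finset.erase_ssubset ht) (by linarith)
          exact ⟨S, hS.trans (Finset.erase_subset t T), hmin⟩
    obtain ⟨S, hS, hmin⟩ := key _ h
    exact ⟨S, hmin, hx, fun s hs => (Finset.mem_filter.mp (hS hs)).2⟩
  · rintro ⟨S, hmin, hx, hc⟩
    refine ⟨hx, hmin.1.trans ?_⟩
    apply Finset.sum_le_sum_of_subset_of_nonneg
    · intro s hs
      exact Finset.mem_filter.mpr ⟨Finset.mem_univ s, hc s hs⟩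
    · intro s _ _
      exact (hπ s).le
end
end

section
/- Let 𝐒_τ denote the collection of all minimal subsets of {1,…,N}. Then F*_τ = min_{S ∈ 𝐒_τ} ν(S), where both sides are taken as infima in the extended reals (with value +∞ if the corresponding feasible set is empty). -/
open scoped Classical
open Finset

noncomputable section

variable {N d p : ℕ}

theorem exists_minimal_aux {N : ℕ} (π : Fin N → ℝ) (τ : ℝ) (A : Finset (Fin N)) :
    1 - τ ≤ ∑ s ∈ A, π s → ∃ S, S ⊆ A ∧ IsMinimalSubset π τ S := by
  induction A using Finset.strongInduction with
  | H A ih =>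
    intro h
    by_cases hm : ∀ t ∈ A, ∑ s ∈ A, π s < 1 - τ + π t
    · exact ⟨A, Finset.Subset.refl _, h, hm⟩
    · push Not at hm
      obtain ⟨t, ht, hle⟩ := hm
      have h2 := Finset.add_sum_erase A π ht
      obtain ⟨S, hS, hmin⟩ := ih (A.erase t) (Finset.erase_ssubset ht) (by linarith)
      exact ⟨S, hS.trans (Finset.erase_subset _ _), hmin⟩

theorem statement_12 {N d p : ℕ}
    (hN : 1 ≤ N) (hd : 1 ≤ d) (hp : 1 ≤ p)
    (X : Set (Fin d → ℝ)) (F : (Fin d → ℝ) → ℝ)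
    (c : (Fin d → ℝ) → (Fin p → ℝ) → ℝ) (ξ : Fin N → (Fin p → ℝ))
    (π : Fin N → ℝ) (τ : ℝ)
    (hπ : ∀ s, 0 < π s) (hπsum : ∑ s, π s = 1) (hτ0 : 0 < τ) (hτ1 : τ < 1)
    :
    Fstar X F c ξ π τ =
      sInf ((fun S => nuVal X F c ξ S) '' {S : Finset (Fin N) | IsMinimalSubset π τ S}) := by
  apply le_antisymm
  · apply le_sInf
    rintro _ ⟨S, hS, rfl⟩
    apply le_sInf
    rintro _ ⟨x, ⟨hx, hc⟩, rfl⟩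
    apply sInf_le
    refine ⟨x, ⟨hx, hS.1.trans ?_⟩, rfl⟩
    apply Finset.sum_le_sum_of_subset_of_nonneg
    · intro s hs
      simp [hc s hs]
    · intro s _ _
      exact (hπ s).le
  · apply le_sInf
    rintro _ ⟨x, ⟨hx, hc⟩, rfl⟩
    obtain ⟨S, hS, hmin⟩ := exists_minimal_aux π τ _ hc
    have h1 : nuVal X F c ξ S ≤ (F x : EReal) := by
      apply sInf_le
      refine ⟨x, ⟨hx, fun s hs => ?_⟩, rfl⟩
      simpa using hS hs
    refine le_trans ?_ h1
    apply sInf_le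
    exact ⟨S, hmin, rfl⟩
end
end
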